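/- Let a be a finite-dimensional simple Lie algebra over ℂ of rank n and suppose each component μ_i(u) (i = 1,...,n) of the highest weight of the Y(a)-module L(μ(u)) is the Laurent expansion at u = ∞ of a rational function P_i(u)/Q_i(u) with P_i(u), Q_i(u) monic polynomials in u of the same degree. Then all weight subspaces of L(μ(u)), regarded as an a-module, are finite-dimensional. -/

import Mathlib

/-!
For a family of generators `X^{(r)}` and a polynomial `p = ∑ p_r u^r` put `X[p] = ∑ p_r X^{(r)}`.
Let `v` be the highest vector of `L = L(μ(u))` and let `V_N` (`level`) be the span of all `f`-words
of length `N` applied to `v`. Then `h` preserves `V_N`, while `e` maps `V_{N+1}` to `V_N`, and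
`L = ∑ V_N`. Since the Cartan matrix is nondegenerate, some combination `D` of the `h_i^{(0)}`
satisfies `[D, f_j^{(s)}] = -f_j^{(s)}`, so `D` is a scalar on each `V_N`, with distinct values for
distinct `N`. Every weight space therefore lies in a single `V_N`, and it suffices to show that all
`V_N` are finite-dimensional.

The stronger statement proved by induction on `N` (`killed_level`) is that some nonzero polynomial
`p` satisfies `h_i[pq] = 0` and `f_i[pq] = 0` on `V_N` for all `i` and all polynomials `q`. Given
this, division with remainder by `p` shows that `V_{N+1}` is spanned by finitely many of the images
`f_i^{(r)} V_N`.

* For `h` on `V_0 = ℂ v` this is the linear recurrence for the `μ_i^{(r)}` read off from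
  `μ_i(u) Q_i(u) = P_i(u)`.
* For `h` on `V_{N+1}` (`killed_H_succ`): if `p` kills `h` on `V_N`, the relation
  `(u - v + c) h_i(u) f_j(v) = f_j(v) h_i(u) (u - v - c)` with `c = d_i a_{ij} / 2` gives
  `h_i[p q r(u + c)] f_j[g] = h_i[p q] f_j[r g]` on `V_N`, which vanishes as soon as `r` kills `f_j`
  on `V_N`.
* For `f` on `V_N` (`killed_F`): if `p` kills `h` on `V_N` and `r` kills `f` on `V_{N-1}`, then
  `[e_j^{(s)}, f_i[g]] = δ_{ij} h_i[u^s g]` shows that all `e_j^{(s)}` annihilate `f_i[p r q] w` for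
  `w ∈ V_N`. A singular vector in `V_{N+1}` generates a submodule contained in the sum of the
  `V_m` with `m > N`, hence a proper one, so it vanishes by irreducibility.
-/

noncomputable section
open scoped BigOperators

/-- Generators of the Yangian in Drinfeld's presentation. -/
inductive YGen (n : ℕ) : Type
  | E : Fin n → ℕ → YGen n
  | H : Fin n → ℕ → YGen n
  | F : Fin n → ℕ → YGen n

abbrev YFree (n : ℕ) : Type := FreeAlgebra ℂ (YGen n)

def Ee {n : ℕ} (i : Fin n) (r : ℕ) : YFree n := FreeAlgebra.ι ℂ (YGen.E i r)
def Hh {n : ℕ} (i : Fin n) (r : ℕ) : YFree n := FreeAlgebra.ι ℂ (YGen.H i r)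
def Ff {n : ℕ} (i : Fin n) (r : ℕ) : YFree n := FreeAlgebra.ι ℂ (YGen.F i r)

/-- Commutator. -/
def br {A : Type*} [Ring A] (x y : A) : A := x * y - y * x

/-- Iterated commutator [x₁,[x₂,…,[xₘ,y]…]]. -/
def symBr {A : Type*} [Ring A] (xs : List A) (y : A) : A := xs.foldr br y

/-- Data of a symmetrizable Cartan matrix of finite type (with coprime symmetrizers),
as for a finite-dimensional semisimple Lie algebra of rank `n`. -/
structure CartanData (n : ℕ) where
  A : Matrix (Fin n) (Fin n) ℤ
  d : Fin n → ℕ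
  d_pos : ∀ i, 0 < d i
  diag : ∀ i, A i i = 2
  offDiag : ∀ i j, i ≠ j → A i j ≤ 0
  symmetrizable : ∀ i j, (d i : ℤ) * A i j = (d j : ℤ) * A j i
  coprime : (Finset.univ : Finset (Fin n)).gcd d = 1
  posDef : Matrix.PosDef (Matrix.of fun i j => ((d i : ℝ) * (A i j : ℝ)))

/-- Indecomposability of the Cartan matrix: corresponds to the Lie algebra being simple. -/
def CartanData.Indecomposable {n : ℕ} (C : CartanData n) : Prop :=
  ∀ S : Set (Fin n), (∀ i ∈ S, ∀ j, j ∉ S → C.A i j = 0) → S = ∅ ∨ S = Set.univ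

/-- Drinfeld's defining relations of the Yangian. -/
inductive YRel {n : ℕ} (C : CartanData n) : YFree n → YFree n → Prop
  | hh (i j : Fin n) (r s : ℕ) : YRel C (br (Hh i r) (Hh j s)) 0
  | ef (i j : Fin n) (r s : ℕ) :
      YRel C (br (Ee i r) (Ff j s)) (if i = j then Hh i (r + s) else 0)
  | he0 (i j : Fin n) (s : ℕ) :
      YRel C (br (Hh i 0) (Ee j s)) (((C.d i : ℂ) * (C.A i j : ℂ)) • Ee j s)
  | hf0 (i j : Fin n) (s : ℕ) :
      YRel C (br (Hh i 0) (Ff j s)) (-(((C.d i : ℂ) * (C.A i j : ℂ)) • Ff j s))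
  | he (i j : Fin n) (r s : ℕ) :
      YRel C (br (Hh i (r + 1)) (Ee j s) - br (Hh i r) (Ee j (s + 1)))
        (((C.d i : ℂ) * (C.A i j : ℂ) / 2) • (Hh i r * Ee j s + Ee j s * Hh i r))
  | hf (i j : Fin n) (r s : ℕ) :
      YRel C (br (Hh i (r + 1)) (Ff j s) - br (Hh i r) (Ff j (s + 1)))
        (-(((C.d i : ℂ) * (C.A i j : ℂ) / 2) • (Hh i r * Ff j s + Ff j s * Hh i r)))
  | ee (i j : Fin n) (r s : ℕ) :
      YRel C (br (Ee i (r + 1)) (Ee j s) - br (Ee i r) (Ee j (s + 1)))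
        (((C.d i : ℂ) * (C.A i j : ℂ) / 2) • (Ee i r * Ee j s + Ee j s * Ee i r))
  | ff (i j : Fin n) (r s : ℕ) :
      YRel C (br (Ff i (r + 1)) (Ff j s) - br (Ff i r) (Ff j (s + 1)))
        (-(((C.d i : ℂ) * (C.A i j : ℂ) / 2) • (Ff i r * Ff j s + Ff j s * Ff i r)))
  | serreE (i j : Fin n) (hij : i ≠ j) (rs : Fin (1 - C.A i j).toNat → ℕ) (s : ℕ) :
      YRel C (∑ σ : Equiv.Perm (Fin (1 - C.A i j).toNat),
        symBr (List.ofFn fun k => Ee i (rs (σ k))) (Ee j s)) 0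
  | serreF (i j : Fin n) (hij : i ≠ j) (rs : Fin (1 - C.A i j).toNat → ℕ) (s : ℕ) :
      YRel C (∑ σ : Equiv.Perm (Fin (1 - C.A i j).toNat),
        symBr (List.ofFn fun k => Ff i (rs (σ k))) (Ff j s)) 0

/-- The Yangian `Y(a)`. -/
abbrev Yangian {n : ℕ} (C : CartanData n) := RingQuot (YRel C)

/-- Canonical projection onto the Yangian. -/
def ymk {n : ℕ} (C : CartanData n) : YFree n →ₐ[ℂ] Yangian C := RingQuot.mkAlgHom ℂ (YRel C)

/-- The left ideal defining the Verma module `M(μ(u))`; here `μ i r` is `μ_i^{(r)}`. -/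
def vermaIdeal {n : ℕ} (C : CartanData n) (μ : Fin n → ℕ → ℂ) :
    Submodule (Yangian C) (Yangian C) :=
  Submodule.span (Yangian C)
    ((Set.range fun p : Fin n × ℕ => ymk C (Ee p.1 p.2)) ∪
     (Set.range fun p : Fin n × ℕ => ymk C (Hh p.1 p.2) - algebraMap ℂ (Yangian C) (μ p.1 p.2)))

/-- The Verma module `M(μ(u))`. -/
abbrev Verma {n : ℕ} (C : CartanData n) (μ : Fin n → ℕ → ℂ) := Yangian C ⧸ vermaIdeal C μ

/-- Highest vector. -/
def oneMu {n : ℕ} (C : CartanData n) (μ : Fin n → ℕ → ℂ) : Verma C μ :=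
  Submodule.Quotient.mk 1

/-- The series `μ_i(u) = 1 + Σ_{r≥0} μ_i^{(r)} u^{-r-1}` as a power series in `t = u^{-1}`. -/
def muSeries (μ : ℕ → ℂ) : PowerSeries ℂ :=
  PowerSeries.mk fun k => if k = 0 then 1 else μ (k - 1)


/-- The unique maximal submodule of the Verma module: the sum of all submodules not
containing the highest vector. -/
def rad {n : ℕ} (C : CartanData n) (μ : Fin n → ℕ → ℂ) : Submodule (Yangian C) (Verma C μ) :=
  sSup {N : Submodule (Yangian C) (Verma C μ) | oneMu C μ ∉ N}

/-- The irreducible quotient `L(μ(u))` of the Verma module. -/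
abbrev Lmod {n : ℕ} (C : CartanData n) (μ : Fin n → ℕ → ℂ) := Verma C μ ⧸ rad C μ

/-- The weight subspace of weight `η` of `L(μ(u))`, with respect to the Cartan subalgebra
spanned by the `h_i^{(0)}`. -/
def weightSet {n : ℕ} (C : CartanData n) (μ : Fin n → ℕ → ℂ) (η : Fin n → ℂ) :
    Set (Lmod C μ) :=
  {y : Lmod C μ | ∀ i : Fin n, ymk C (Hh i 0) • y = η i • y}

/-- The weight subspace of weight `η` of `L(μ(u))` is finite-dimensional (over `ℂ`). -/
def WeightFinDim {n : ℕ} (C : CartanData n) (μ : Fin n → ℕ → ℂ) (η : Fin n → ℂ) : Prop :=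
  ∃ s : Finset (Lmod C μ),
    weightSet C μ η ⊆ (Submodule.span ℂ (s : Set (Lmod C μ)) : Submodule ℂ (Lmod C μ))
/-- `u = t⁻¹` inside the field of formal Laurent series in `t = u⁻¹`. -/
noncomputable def uu : LaurentSeries ℂ := HahnSeries.single (-1 : ℤ) 1

/-- A power series in `u⁻¹`, viewed as a formal Laurent series in `u⁻¹`. -/
noncomputable def lexp (ν : PowerSeries ℂ) : LaurentSeries ℂ := HahnSeries.ofPowerSeries ℤ ℂ ν

/-- `ν` is the Laurent expansion at `u = ∞` of a rational function in `u`: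
there are nonzero polynomials `P(u)`, `Q(u)` with `ν(u)·Q(u) = P(u)` as formal
Laurent series in `u⁻¹`. -/
def IsRationalAtInf (ν : PowerSeries ℂ) : Prop :=
  ∃ P Q : Polynomial ℂ, P ≠ 0 ∧ Q ≠ 0 ∧
    lexp ν * Polynomial.aeval uu Q = Polynomial.aeval uu P

/-- `ν` is the Laurent expansion at `u = ∞` of `P(u)/Q(u)` with `P`, `Q` monic of the
same degree. -/
def IsRationalAtInfMonic (ν : PowerSeries ℂ) : Prop :=
  ∃ P Q : Polynomial ℂ, P.Monic ∧ Q.Monic ∧ P.natDegree = Q.natDegree ∧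
    lexp ν * Polynomial.aeval uu Q = Polynomial.aeval uu P


/-! ### Operators satisfying the triangular part of Drinfeld's relations -/

/-- Operators on a complex vector space satisfying those of Drinfeld's relations that relate
generators of different kinds (`e`-`f`, `h`-`e`, `h`-`f`), where `a i j` is the entry
`d_i a_{ij}` of the symmetrized Cartan matrix. The remaining relations play no role in the
finiteness of weight spaces. -/
structure DrinfeldOps (ι M : Type*) [DecidableEq ι] [AddCommGroup M] [Module ℂ M]
    (a : ι → ι → ℂ) where
  E : ι → ℕ → Module.End ℂ M
  H : ι → ℕ → Module.End ℂ M
  F : ι → ℕ → Module.End ℂ M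
  ef : ∀ i j r s x, E i r (F j s x) = F j s (E i r x) + if i = j then H i (r + s) x else 0
  he0 : ∀ i j s x, H i 0 (E j s x) = E j s (H i 0 x) + a i j • E j s x
  hf0 : ∀ i j s x, H i 0 (F j s x) = F j s (H i 0 x) - a i j • F j s x
  he : ∀ i j r s x, H i (r + 1) (E j s x) - E j s (H i (r + 1) x)
      - (H i r (E j (s + 1) x) - E j (s + 1) (H i r x))
      = (a i j / 2) • (H i r (E j s x) + E j s (H i r x))
  hf : ∀ i j r s x, H i (r + 1) (F j s x) - F j s (H i (r + 1) x)
      - (H i r (F j (s + 1) x) - F j (s + 1) (H i r x))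
      = -((a i j / 2) • (H i r (F j s x) + F j s (H i r x)))

namespace DrinfeldOps

variable {ι M : Type*} [DecidableEq ι] [AddCommGroup M] [Module ℂ M] {a : ι → ι → ℂ}
  (O : DrinfeldOps ι M a)

/-- A subspace stable under all the operators. -/
def Stable (S : Submodule ℂ M) : Prop :=
  ∀ i r, ∀ x ∈ S, O.E i r x ∈ S ∧ O.H i r x ∈ S ∧ O.F i r x ∈ S

/-- The span of all `f`-words of length `N` applied to vectors of `W`. -/
def level (W : Submodule ℂ M) : ℕ → Submodule ℂ M
  | 0 => W
  | N + 1 => ⨆ i, ⨆ r, (level W N).map (O.F i r)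

variable {O} {W : Submodule ℂ M}

lemma F_mem_level {N : ℕ} {x : M} (hx : x ∈ O.level W N) (i : ι) (r : ℕ) :
    O.F i r x ∈ O.level W (N + 1) :=
  Submodule.mem_iSup_of_mem i (Submodule.mem_iSup_of_mem r (Submodule.mem_map_of_mem hx))

lemma level_succ_le {N : ℕ} {T : Submodule ℂ M}
    (h : ∀ i r, ∀ x ∈ O.level W N, O.F i r x ∈ T) : O.level W (N + 1) ≤ T := by
  refine iSup_le fun i => iSup_le fun r => ?_
  rintro _ ⟨x, hx, rfl⟩
  exact h i r x hx

lemma H_mem_level (hW : ∀ i r, ∀ x ∈ W, O.H i r x ∈ W) (N : ℕ) :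
    ∀ i r, ∀ x ∈ O.level W N, O.H i r x ∈ O.level W N := by
  induction N with
  | zero => exact hW
  | succ N ih =>
    intro i r
    suffices h : ∀ j s, ∀ x ∈ O.level W N, O.H i r (O.F j s x) ∈ O.level W (N + 1) by
      intro x hx
      exact level_succ_le (T := (O.level W (N + 1)).comap (O.H i r)) h hx
    induction r with
    | zero =>
      intro j s x hx
      rw [O.hf0]
      exact sub_mem (F_mem_level (ih _ _ _ hx) _ _)
        (Submodule.smul_mem _ _ (F_mem_level hx _ _))
    | succ r ihr =>
      intro j s x hx
      have h := O.hf i j r s x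
      have h' : O.H i (r + 1) (O.F j s x) = O.F j s (O.H i (r + 1) x)
          + (O.H i r (O.F j (s + 1) x) - O.F j (s + 1) (O.H i r x))
          - (a i j / 2) • (O.H i r (O.F j s x) + O.F j s (O.H i r x)) := by
        rw [sub_eq_iff_eq_add, sub_eq_iff_eq_add] at h
        rw [h]; abel
      rw [h']
      exact sub_mem (add_mem (F_mem_level (ih _ _ _ hx) _ _)
        (sub_mem (ihr _ _ _ hx) (F_mem_level (ih _ _ _ hx) _ _)))
        (Submodule.smul_mem _ _ (add_mem (ihr _ _ _ hx) (F_mem_level (ih _ _ _ hx) _ _)))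

lemma E_mem_level (hW : ∀ i r, ∀ x ∈ W, O.H i r x ∈ W) (hE : ∀ i r, ∀ x ∈ W, O.E i r x = 0)
    (N : ℕ) : ∀ i r, ∀ x ∈ O.level W (N + 1), O.E i r x ∈ O.level W N := by
  have key : ∀ N, (∀ i r j s, ∀ x ∈ O.level W N, O.F j s (O.E i r x) ∈ O.level W N) →
      ∀ i r, ∀ x ∈ O.level W (N + 1), O.E i r x ∈ O.level W N := by
    intro N h i r x hx
    refine level_succ_le (T := (O.level W N).comap (O.E i r)) (fun j s y hy => ?_) hx
    rw [Submodule.mem_comap, O.ef]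
    refine add_mem (h _ _ _ _ _ hy) ?_
    split_ifs
    · exact H_mem_level hW N _ _ _ hy
    · exact zero_mem _
  induction N with
  | zero =>
    refine key 0 fun i r j s x hx => ?_
    rw [hE i r x hx, map_zero]
    exact zero_mem _
  | succ N ih => exact key _ fun i r j s x hx => F_mem_level (ih _ _ _ hx) _ _

lemma stable_iSup_level (hW : ∀ i r, ∀ x ∈ W, O.H i r x ∈ W)
    (hE : ∀ i r, ∀ x ∈ W, O.E i r x = 0) : O.Stable (⨆ N, O.level W N) := by
  have main : ∀ T : Module.End ℂ M, (∀ N, ∀ x ∈ O.level W N, T x ∈ ⨆ N, O.level W N) →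
      ∀ x ∈ ⨆ N, O.level W N, T x ∈ ⨆ N, O.level W N := fun T h x hx =>
    (iSup_le h : (⨆ N, O.level W N) ≤ (⨆ N, O.level W N).comap T) hx
  intro i r x hx
  refine ⟨main _ ?_ x hx, main _ ?_ x hx, main _ ?_ x hx⟩
  · rintro (_ | N) y hy
    · rw [hE i r y hy]
      exact zero_mem _
    · exact Submodule.mem_iSup_of_mem N (E_mem_level hW hE N _ _ _ hy)
  · exact fun N y hy => Submodule.mem_iSup_of_mem N (H_mem_level hW N _ _ _ hy)
  · exact fun N y hy => Submodule.mem_iSup_of_mem (N + 1) (F_mem_level hy _ _)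

/-- An operator `D` with `[D, f_j^{(s)}] = -f_j^{(s)}` grades the levels by eigenvalues. -/
lemma level_le_eigenspace {D : Module.End ℂ M}
    (hD : ∀ j s x, D (O.F j s x) = O.F j s (D x) - O.F j s x) {c : ℂ}
    (hW : W ≤ D.eigenspace c) (N : ℕ) : O.level W N ≤ D.eigenspace (c - N) := by
  induction N with
  | zero => simpa [level] using hW
  | succ N ih =>
    refine level_succ_le fun j s x hx => ?_
    have h := Module.End.mem_eigenspace_iff.1 (ih hx)
    rw [Module.End.mem_eigenspace_iff, hD, h, map_smul]
    push_cast
    module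

/-- The levels of `W` carry the `D`-eigenvalues `c, c - 1, c - 2, …`, so their sum contains no
nonzero eigenvector with an eigenvalue `c'` outside this list. -/
lemma eq_zero_of_mem_iSup_level {D : Module.End ℂ M}
    (hD : ∀ j s x, D (O.F j s x) = O.F j s (D x) - O.F j s x) {c c' : ℂ}
    (hW : W ≤ D.eigenspace c) {v : M} (hv : D v = c' • v) (hc : ∀ N : ℕ, c - N ≠ c')
    (h : v ∈ ⨆ N, O.level W N) : v = 0 := by
  have hle : (⨆ N, O.level W N) ≤ ⨆ b, ⨆ (_ : b ≠ c'), D.eigenspace b :=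
    iSup_le fun N => (level_le_eigenspace hD hW N).trans
      (le_iSup₂_of_le (c - N) (hc N) le_rfl)
  exact Submodule.disjoint_def.1 (D.eigenspaces_iSupIndep c') v
    (Module.End.mem_eigenspace_iff.2 hv) (hle h)

/-! ### Singular vectors -/

variable (O) in
/-- The vectors of `V` killed by all the raising operators. -/
def singular (V : Submodule ℂ M) : Submodule ℂ M :=
  V ⊓ ⨅ i, ⨅ r, LinearMap.ker (O.E i r)

lemma mem_singular {V : Submodule ℂ M} {x : M} :
    x ∈ O.singular V ↔ x ∈ V ∧ ∀ i r, O.E i r x = 0 := by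
  simp [singular]

lemma H_mem_singular {V : Submodule ℂ M} (hV : ∀ i r, ∀ x ∈ V, O.H i r x ∈ V) (i : ι) (r : ℕ)
    (x : M) (hx : x ∈ O.singular V) : O.H i r x ∈ O.singular V := by
  rw [mem_singular] at hx ⊢
  refine ⟨hV i r x hx.1, ?_⟩
  have hE := hx.2
  induction r with
  | zero =>
    intro j s
    simpa [hE] using (O.he0 i j s x).symm
  | succ r ih =>
    intro j s
    simpa [hE, ih] using O.he i j r s x

end DrinfeldOps

/-! ### Polynomial combinations of the generators -/

open Polynomial in
/-- For a family `X^{(r)}` of operators, the operator `∑ p_r X^{(r)}` attached to the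
polynomial `p = ∑ p_r u^r`. -/
def polyOp {M : Type*} [AddCommGroup M] [Module ℂ M] (X : ℕ → Module.End ℂ M) :
    ℂ[X] →ₗ[ℂ] Module.End ℂ M :=
  (Polynomial.basisMonomials ℂ).constr ℂ X

section polyOp

open Polynomial

variable {M : Type*} [AddCommGroup M] [Module ℂ M] (X : ℕ → Module.End ℂ M)

lemma polyOp_X_pow (r : ℕ) : polyOp X (Polynomial.X ^ r) = X r := by
  have := (Polynomial.basisMonomials ℂ).constr_basis ℂ X r
  rw [Polynomial.coe_basisMonomials] at this
  rw [← Polynomial.monomial_one_right_eq_X_pow]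
  exact this

lemma polyOp_apply (p : ℂ[X]) (x : M) :
    polyOp X p x = ∑ r ∈ Finset.range (p.natDegree + 1), p.coeff r • X r x := by
  conv_lhs => rw [p.as_sum_range_C_mul_X_pow]
  simp [map_sum, ← Polynomial.smul_eq_C_mul, polyOp_X_pow]

/-- Two linear functions of a polynomial agree if they agree on the powers of `u`. -/
lemma poly_linear_ext {N : Type*} [AddCommGroup N] [Module ℂ N] {S T : ℂ[X] →ₗ[ℂ] N}
    (h : ∀ r, S (Polynomial.X ^ r) = T (Polynomial.X ^ r)) (p : ℂ[X]) : S p = T p := by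
  refine LinearMap.congr_fun (Polynomial.lhom_ext' fun r => LinearMap.ext_ring ?_) p
  simpa [Polynomial.monomial_one_right_eq_X_pow] using h r

end polyOp

namespace DrinfeldOps

open Polynomial

variable {ι M : Type*} [DecidableEq ι] [AddCommGroup M] [Module ℂ M] {a : ι → ι → ℂ}
  {O : DrinfeldOps ι M a} {W : Submodule ℂ M}

lemma polyOp_F_mem_level {N : ℕ} {x : M} (hx : x ∈ O.level W N) (i : ι) (p : ℂ[X]) :
    polyOp (O.F i) p x ∈ O.level W (N + 1) := by
  rw [polyOp_apply]
  exact Submodule.sum_mem _ fun r _ => Submodule.smul_mem _ _ (F_mem_level hx i r)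

lemma E_polyOp_F (i j : ι) (s : ℕ) (p : ℂ[X]) (x : M) :
    O.E j s (polyOp (O.F i) p x) = polyOp (O.F i) p (O.E j s x)
      + if j = i then polyOp (O.H i) (X ^ s * p) x else 0 := by
  have := poly_linear_ext
    (S := (O.E j s) ∘ₗ (polyOp (O.F i)).flip x)
    (T := (polyOp (O.F i)).flip (O.E j s x)
      + if j = i then (polyOp (O.H i)).flip x ∘ₗ LinearMap.mulLeft ℂ (X ^ s) else 0)
    (fun r => by
      split_ifs with h
      · subst h; simp [polyOp_X_pow, ← pow_add, O.ef]
      · simp [polyOp_X_pow, O.ef, h]) p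
  split_ifs at this ⊢ with h <;> simpa using this

/-- The generating-series form `(u - v + c) h_i(u) f_j(v) = f_j(v) h_i(u) (u - v - c)`,
`c = d_i a_{ij} / 2`, of the `h`-`f` relation. -/
lemma polyOp_hf (i j : ι) (p q : ℂ[X]) (x : M) :
    polyOp (O.H i) (X * p) (polyOp (O.F j) q x) - polyOp (O.F j) q (polyOp (O.H i) (X * p) x)
      - (polyOp (O.H i) p (polyOp (O.F j) (X * q) x)
        - polyOp (O.F j) (X * q) (polyOp (O.H i) p x))
      = -((a i j / 2) • (polyOp (O.H i) p (polyOp (O.F j) q x)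
        + polyOp (O.F j) q (polyOp (O.H i) p x))) := by
  induction p using Polynomial.induction_on' with
  | add p₁ p₂ h₁ h₂ =>
    simp only [mul_add, map_add, LinearMap.add_apply]
    linear_combination (norm := module) h₁ + h₂
  | monomial r b =>
    induction q using Polynomial.induction_on' with
    | add q₁ q₂ h₁ h₂ =>
      simp only [mul_add, map_add, LinearMap.add_apply] at h₁ h₂ ⊢
      linear_combination (norm := module) h₁ + h₂
    | monomial s b' =>
      have h := O.hf i j r s x
      simp only [← C_mul_X_pow_eq_monomial, ← Polynomial.smul_eq_C_mul, mul_smul_comm,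
        ← pow_succ', map_smul, LinearMap.smul_apply, polyOp_X_pow]
      linear_combination (norm := module) (b * b') • h

/-- If `h_i` is killed on `x` by all multiples of `p`, then multiplication by `r(u + c)` in the
`h_i`-variable may be traded for multiplication by `r(v)` in the `f_j`-variable. -/
lemma polyOp_shift (i j : ι) {p : ℂ[X]} {x : M}
    (hp : ∀ q, polyOp (O.H i) (p * q) x = 0) (r : ℂ[X]) : ∀ q g : ℂ[X],
    polyOp (O.H i) (p * q * r.comp (X + C (a i j / 2))) (polyOp (O.F j) g x)
      = polyOp (O.H i) (p * q) (polyOp (O.F j) (r * g) x) := by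
  induction r using Polynomial.induction_on with
  | C b =>
    intro q g
    rw [C_comp, mul_comm _ (C b), ← Polynomial.smul_eq_C_mul, ← Polynomial.smul_eq_C_mul]
    simp
  | add r₁ r₂ h₁ h₂ =>
    intro q g
    simp only [add_comp, mul_add, add_mul, map_add, LinearMap.add_apply, h₁, h₂]
  | monomial m b ih =>
    intro q g
    have h := polyOp_hf (O := O) i j (p * q) (C b * X ^ m * g) x
    rw [show X * (p * q) = p * (X * q) by ring, hp, hp] at h
    have h1 : polyOp (O.H i) (p * (X * q)) (polyOp (O.F j) (C b * X ^ m * g) x)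
        + (a i j / 2) • polyOp (O.H i) (p * q) (polyOp (O.F j) (C b * X ^ m * g) x)
        = polyOp (O.H i) (p * q) (polyOp (O.F j) (X * (C b * X ^ m * g)) x) := by
      simp only [map_zero, sub_zero, add_zero] at h
      linear_combination (norm := module) h
    rw [← ih, ← ih] at h1
    rw [show C b * X ^ (m + 1) * g = X * (C b * X ^ m * g) by ring, ← h1, ← LinearMap.smul_apply,
      ← map_smul, ← LinearMap.add_apply, ← map_add]
    congr 2
    simp only [mul_comp, C_comp, pow_comp, X_comp, Polynomial.smul_eq_C_mul]
    ring

/-! ### Rational dependence of the generators on each level -/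

variable (O) in
/-- Some nonzero polynomial kills the family `T` of operators on the subspace `V`: on `V` the
generating series `∑ T^{(r)} u^{-r-1}` is then rational. -/
def Killed (T : ι → ℕ → Module.End ℂ M) (V : Submodule ℂ M) : Prop :=
  ∃ p : ℂ[X], p ≠ 0 ∧ ∀ i q, ∀ x ∈ V, polyOp (T i) (p * q) x = 0

lemma killed_H_succ [Finite ι] {N : ℕ} (hH : Killed O.H (O.level W N))
    (hF : Killed O.F (O.level W N)) : Killed O.H (O.level W (N + 1)) := by
  cases nonempty_fintype ι
  obtain ⟨p, hp0, hp⟩ := hH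
  obtain ⟨r, hr0, hr⟩ := hF
  have hne : ∀ b : ℂ, r.comp (X + C b) ≠ 0 := fun b h => hr0 (by
    have := congrArg (fun t => t.comp (X - C b)) h
    simpa [comp_assoc] using this)
  refine ⟨p * ∏ k : ι × ι, r.comp (X + C (a k.1 k.2 / 2)),
    mul_ne_zero hp0 (Finset.prod_ne_zero_iff.2 fun k _ => hne _), fun i q x hx => ?_⟩
  refine level_succ_le (T := LinearMap.ker (polyOp (O.H i) _)) (fun j s y hy => ?_) hx
  rw [LinearMap.mem_ker, ← polyOp_X_pow (O.F j)]
  obtain ⟨t, ht⟩ := Finset.dvd_prod_of_mem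
    (fun k : ι × ι => r.comp (X + C (a k.1 k.2 / 2))) (Finset.mem_univ (i, j))
  rw [ht, show p * (r.comp (X + C (a i j / 2)) * t) * q
    = p * (t * q) * r.comp (X + C (a i j / 2)) by ring,
    polyOp_shift i j (fun q => hp i q y hy), hr j _ y hy, map_zero]

/-- The product of a polynomial killing `h` on level `N` and one killing `f` on the image of level
`N` under the `e_j^{(s)}` kills `f` on level `N`: the vectors it produces are singular in level
`N + 1`, and so vanish. -/
lemma killed_F {N : ℕ} (hsing : ∀ x ∈ O.level W (N + 1), (∀ i r, O.E i r x = 0) → x = 0)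
    (hH : Killed O.H (O.level W N))
    (hE : ∃ p : ℂ[X], p ≠ 0 ∧
      ∀ i q j s, ∀ x ∈ O.level W N, polyOp (O.F i) (p * q) (O.E j s x) = 0) :
    Killed O.F (O.level W N) := by
  obtain ⟨p, hp0, hp⟩ := hH
  obtain ⟨r, hr0, hr⟩ := hE
  refine ⟨p * r, mul_ne_zero hp0 hr0, fun i q x hx =>
    hsing _ (polyOp_F_mem_level hx i _) fun j s => ?_⟩
  rw [E_polyOp_F, show p * r * q = r * (p * q) by ring, hr i _ j s x hx, zero_add]
  split_ifs
  · rw [show X ^ s * (r * (p * q)) = p * (X ^ s * r * q) by ring, hp i _ x hx]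
  · rfl

lemma killed_level [Finite ι] (hW : ∀ i r, ∀ x ∈ W, O.H i r x ∈ W)
    (hE : ∀ i r, ∀ x ∈ W, O.E i r x = 0)
    (hsing : ∀ N, ∀ x ∈ O.level W (N + 1), (∀ i r, O.E i r x = 0) → x = 0)
    (h0 : Killed O.H W) (N : ℕ) :
    Killed O.H (O.level W N) ∧ Killed O.F (O.level W N) := by
  induction N with
  | zero =>
    refine ⟨h0, killed_F (hsing 0) h0 ⟨1, one_ne_zero, fun i q j s x hx => ?_⟩⟩
    rw [hE j s x hx, map_zero]
  | succ N ih =>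
    have h := killed_H_succ ih.1 ih.2
    obtain ⟨p, hp0, hp⟩ := ih.2
    exact ⟨h, killed_F (hsing _) h
      ⟨p, hp0, fun i q j s x hx => hp i q _ (E_mem_level hW hE N _ _ _ hx)⟩⟩

lemma finite_level_succ [Finite ι] {N : ℕ} (hfin : FiniteDimensional ℂ (O.level W N))
    (hF : Killed O.F (O.level W N)) : FiniteDimensional ℂ (O.level W (N + 1)) := by
  obtain ⟨p, hp0, hp⟩ := hF
  refine Submodule.finiteDimensional_of_le
    (S₂ := ⨆ i, ⨆ r : Fin (p.natDegree + 1), (O.level W N).map (O.F i r))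
    (level_succ_le fun i s x hx => ?_)
  have h : O.F i s x = polyOp (O.F i) (X ^ s % p) x := by
    rw [← polyOp_X_pow (O.F i) s]
    conv_lhs => rw [← EuclideanDomain.div_add_mod (X ^ s) p]
    rw [map_add, LinearMap.add_apply, hp i _ x hx, zero_add]
  rw [h, polyOp_apply]
  refine Submodule.sum_mem _ fun r hr => Submodule.smul_mem _ _
    (Submodule.mem_iSup_of_mem i (Submodule.mem_iSup_of_mem
      (⟨r, ?_⟩ : Fin (p.natDegree + 1)) (Submodule.mem_map_of_mem hx)))
  have h1 : (X ^ s % p).natDegree ≤ p.natDegree :=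
    natDegree_le_natDegree (EuclideanDomain.mod_lt (X ^ s) hp0).le
  have h2 := Finset.mem_range.1 hr
  omega

/-- Finiteness of the eigenspaces of the grading operator `D` on an irreducible highest weight
module whose highest weight satisfies linear recurrences. Irreducibility and cyclicity are
expressed by `hirr` and `hcyc`; the vector `v` may be zero. -/
theorem exists_finite_eigenspace [Finite ι] {v : M} {m : ι → ℕ → ℂ}
    (hEv : ∀ i r, O.E i r v = 0) (hHv : ∀ i r, O.H i r v = m i r • v)
    (hcyc : ∀ S, O.Stable S → v ∈ S → S = ⊤) (hirr : ∀ S, O.Stable S → v ∉ S → S = ⊥)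
    (h0 : Killed O.H (Submodule.span ℂ {v}))
    {D : Module.End ℂ M} (hD : ∀ j s x, D (O.F j s x) = O.F j s (D x) - O.F j s x)
    {c : ℂ} (hDv : D v = c • v) (b : ℂ) :
    ∃ V : Submodule ℂ M, FiniteDimensional ℂ V ∧ D.eigenspace b ≤ V := by
  set W := Submodule.span ℂ {v} with hWdef
  have hvW : v ∈ W := Submodule.mem_span_singleton_self v
  have hW : ∀ i r, ∀ x ∈ W, O.H i r x ∈ W := by
    intro i r x hx
    obtain ⟨t, rfl⟩ := Submodule.mem_span_singleton.1 hx
    rw [map_smul, hHv]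
    exact W.smul_mem _ (W.smul_mem _ hvW)
  have hE : ∀ i r, ∀ x ∈ W, O.E i r x = 0 := by
    intro i r x hx
    obtain ⟨t, rfl⟩ := Submodule.mem_span_singleton.1 hx
    rw [map_smul, hEv, smul_zero]
  have hWD : W ≤ D.eigenspace c := by
    rw [hWdef, Submodule.span_singleton_le_iff_mem, Module.End.mem_eigenspace_iff, hDv]
  have htop : (⨆ N, O.level W N) = ⊤ :=
    hcyc _ (stable_iSup_level hW hE) (Submodule.mem_iSup_of_mem 0 hvW)
  have hsing : ∀ N, ∀ x ∈ O.level W (N + 1), (∀ i r, O.E i r x = 0) → x = 0 := by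
    intro N x hx hEx
    set U := O.singular (O.level W (N + 1))
    have hxU : x ∈ U := mem_singular.2 ⟨hx, hEx⟩
    have hst : O.Stable (⨆ k, O.level U k) :=
      stable_iSup_level (H_mem_singular (H_mem_level hW _)) fun i r y hy =>
        (mem_singular.1 hy).2 i r
    have hxS : x ∈ ⨆ k, O.level U k := Submodule.mem_iSup_of_mem 0 hxU
    by_cases hv : v ∈ ⨆ k, O.level U k
    · -- then `v` has two different eigenvalues, so `v = 0` and the whole module vanishes
      have hv0 : v = 0 := eq_zero_of_mem_iSup_level hD
        ((inf_le_left : U ≤ _).trans (level_le_eigenspace hD hWD (N + 1))) hDv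
        (fun k h => by
          have h' : ((N + 1 + k : ℕ) : ℂ) = 0 := by
            push_cast at h ⊢
            linear_combination -h
          exact absurd (Nat.cast_eq_zero.1 h') (by omega)) hv
      have hbot : (⊥ : Submodule ℂ M) = ⊤ :=
        hcyc ⊥ (fun i r y hy => by simp [(Submodule.mem_bot ℂ).1 hy])
          (by simp [hv0])
      exact (Submodule.mem_bot ℂ).1 (hbot ▸ Submodule.mem_top)
    · exact (Submodule.mem_bot ℂ).1 (hirr _ hst hv ▸ hxS)
  have hfin : ∀ N, FiniteDimensional ℂ (O.level W N) := by
    intro N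
    induction N with
    | zero =>
      change FiniteDimensional ℂ W
      rw [hWdef]
      infer_instance
    | succ N ih => exact finite_level_succ ih (killed_level hW hE hsing h0 N).2
  by_cases hb : ∃ N : ℕ, c - N = b
  · obtain ⟨N, hN⟩ := hb
    refine ⟨O.level W N, hfin N, fun y hy => ?_⟩
    have hsplit : (⊤ : Submodule ℂ M) ≤ O.level W N ⊔ ⨆ b', ⨆ (_ : b' ≠ b), D.eigenspace b' := by
      rw [← htop]
      refine iSup_le fun k => ?_
      by_cases hk : k = N
      · exact hk ▸ le_sup_left
      · refine le_sup_of_le_right ((level_le_eigenspace hD hWD k).trans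
          (le_iSup₂_of_le (c - k) (fun h => hk ?_) le_rfl))
        have : (k : ℂ) = N := by linear_combination hN - h
        exact_mod_cast this
    obtain ⟨y₁, hy₁, y₂, hy₂, rfl⟩ := Submodule.mem_sup.1 (hsplit (Submodule.mem_top (x := y)))
    have hy₁' : y₁ ∈ D.eigenspace b := hN ▸ level_le_eigenspace hD hWD N hy₁
    have hy₂' : y₂ ∈ D.eigenspace b := by simpa using sub_mem hy hy₁'
    rw [Submodule.disjoint_def.1 (D.eigenspaces_iSupIndep b) y₂ hy₂' hy₂, add_zero]
    exact hy₁
  · refine ⟨⊥, inferInstance, fun y hy => (Submodule.mem_bot ℂ).2 ?_⟩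
    exact eq_zero_of_mem_iSup_level hD hWD (Module.End.mem_eigenspace_iff.1 hy)
      (fun N h => hb ⟨N, h⟩) (htop ▸ Submodule.mem_top)

end DrinfeldOps

/-! ### Modules over the Yangian -/

section Yangian

variable {n : ℕ} (C : CartanData n)

/-- Entries `d_i a_{ij}` of the symmetrized Cartan matrix. -/
def symEntry (i j : Fin n) : ℂ := (C.d i : ℂ) * (C.A i j : ℂ)

lemma ymk_rel {x y : YFree n} (h : YRel C x y) : ymk C x = ymk C y :=
  RingQuot.mkAlgHom_rel ℂ h

/-- Some combination of the `h_i` pairs to `1` with every simple root, the symmetrized Cartan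
matrix being nondegenerate. -/
lemma exists_coweight : ∃ c : Fin n → ℂ, ∀ j, ∑ i, c i * symEntry C i j = 1 := by
  have hu := C.posDef.isUnit
  set B : Matrix (Fin n) (Fin n) ℝ := Matrix.of fun i j => ((C.d i : ℝ) * (C.A i j : ℝ)) with hB
  obtain ⟨c, hc⟩ := Matrix.vecMul_surjective_iff_isUnit.2 hu (fun _ => 1)
  refine ⟨fun i => c i, fun j => ?_⟩
  have h := congrArg (fun t : ℝ => (t : ℂ)) (congrFun hc j)
  simpa [Matrix.vecMul, dotProduct, hB, symEntry] using h

/-- The coefficients of `Q` give a linear recurrence for those of `ν = P / Q`. -/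
lemma exists_recurrence {m : ℕ → ℂ} (h : IsRationalAtInfMonic (muSeries m)) :
    ∃ Q : Polynomial ℂ, Q ≠ 0 ∧ ∀ s,
      ∑ r ∈ Finset.range (Q.natDegree + 1), Q.coeff r * m (r + s) = 0 := by
  obtain ⟨P, Q, -, hQ, -, h⟩ := h
  have hpow : ∀ r : ℕ, uu ^ r = HahnSeries.single (-(r : ℤ)) (1 : ℂ) := by
    intro r
    simp [uu, HahnSeries.single_pow]
  have haeval : ∀ R : Polynomial ℂ, Polynomial.aeval uu R
      = ∑ r ∈ Finset.range (R.natDegree + 1), HahnSeries.single (-(r : ℤ)) (R.coeff r) := by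
    intro R
    rw [Polynomial.aeval_eq_sum_range]
    refine Finset.sum_congr rfl fun r _ => ?_
    rw [hpow, Algebra.smul_def, HahnSeries.algebraMap_apply', PowerSeries.algebraMap_apply,
      Algebra.algebraMap_self_apply, HahnSeries.ofPowerSeries_C, HahnSeries.C_apply,
      HahnSeries.single_mul_single]
    simp
  refine ⟨Q, hQ.ne_zero, fun s => ?_⟩
  -- compare the coefficients of `u^{-s-1}`
  have hc := congrArg (fun f : LaurentSeries ℂ => HahnSeries.coeff f ((s : ℤ) + 1)) h
  simp only [haeval, Finset.mul_sum, HahnSeries.coeff_sum] at hc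
  rw [Finset.sum_eq_zero (s := Finset.range (P.natDegree + 1)) fun r _ =>
    HahnSeries.coeff_single_of_ne (by omega)] at hc
  rw [← hc]
  refine Finset.sum_congr rfl fun r _ => ?_
  have := HahnSeries.coeff_mul_single_add (r := Q.coeff r) (x := lexp (muSeries m))
    (a := ((r + s + 1 : ℕ) : ℤ)) (b := -(r : ℤ))
  rw [show ((r + s + 1 : ℕ) : ℤ) + -(r : ℤ) = (s : ℤ) + 1 by push_cast; ring] at this
  rw [this, lexp, HahnSeries.ofPowerSeries_apply_coeff]
  simp [muSeries, mul_comm]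

variable (M : Type*) [AddCommGroup M] [Module (Yangian C) M] [Module ℂ M]
  [IsScalarTower ℂ (Yangian C) M]

/-- The action of an element of the free algebra on a module over the Yangian. -/
def act (x : YFree n) : Module.End ℂ M :=
  Algebra.lsmul ℂ ℂ M (ymk C x)

variable {M} in
lemma act_apply (x : YFree n) (y : M) : act C M x y = ymk C x • y := rfl

/-- The action of the Drinfeld generators on a module over the Yangian. -/
def moduleOps : DrinfeldOps (Fin n) M (symEntry C) where
  E i r := act C M (Ee i r)
  H i r := act C M (Hh i r)
  F i r := act C M (Ff i r)
  ef i j r s x := by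
    have h := congrArg (· • x) (ymk_rel C (YRel.ef i j r s))
    split_ifs at h ⊢ <;>
    simp only [br, map_sub, map_mul, sub_smul, mul_smul, map_zero, zero_smul] at h <;>
    exact sub_eq_iff_eq_add'.1 h
  he0 i j s x := by
    have h := congrArg (· • x) (ymk_rel C (YRel.he0 i j s))
    simp only [br, map_sub, map_mul, map_smul, sub_smul, mul_smul, smul_assoc] at h
    rw [symEntry, mul_smul]
    exact sub_eq_iff_eq_add'.1 h
  hf0 i j s x := by
    have h := congrArg (· • x) (ymk_rel C (YRel.hf0 i j s))
    simp only [br, map_sub, map_mul, map_neg, map_smul, sub_smul, mul_smul, neg_smul,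
      smul_assoc] at h
    rw [symEntry, mul_smul]
    exact (sub_eq_iff_eq_add'.1 h).trans (sub_eq_add_neg _ _).symm
  he i j r s x := by
    have h := congrArg (· • x) (ymk_rel C (YRel.he i j r s))
    simp only [br, map_sub, map_add, map_mul, map_smul, sub_smul, add_smul, mul_smul,
      smul_assoc] at h
    exact h
  hf i j r s x := by
    have h := congrArg (· • x) (ymk_rel C (YRel.hf i j r s))
    simp only [br, map_sub, map_add, map_mul, map_neg, map_smul, sub_smul, add_smul, mul_smul,
      neg_smul, smul_assoc] at h
    exact h

variable {M}

/-- Subspaces stable under the generators are stable under the whole Yangian. -/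
lemma smul_mem_of_stable {S : Submodule ℂ M} (hS : (moduleOps C M).Stable S)
    (x : Yangian C) {y : M} (hy : y ∈ S) : x • y ∈ S := by
  obtain ⟨x, rfl⟩ := RingQuot.mkAlgHom_surjective ℂ (YRel C) x
  change ymk C x • y ∈ S
  induction x using FreeAlgebra.induction generalizing y with
  | grade0 t =>
    rw [AlgHom.commutes, algebraMap_smul]
    exact S.smul_mem _ hy
  | grade1 g =>
    cases g with
    | E i r => exact (hS i r y hy).1
    | H i r => exact (hS i r y hy).2.1
    | F i r => exact (hS i r y hy).2.2
  | mul b c hb hc =>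
    rw [map_mul, mul_smul]
    exact hb (hc hy)
  | add b c hb hc =>
    rw [map_add, add_smul]
    exact add_mem (hb hy) (hc hy)

open Polynomial in
lemma killed_span {μ : Fin n → ℕ → ℂ} (h : ∀ i, IsRationalAtInfMonic (muSeries (μ i))) {v : M}
    (hv : ∀ i r, act C M (Hh i r) v = μ i r • v) :
    DrinfeldOps.Killed (moduleOps C M).H (Submodule.span ℂ {v}) := by
  choose Q hQ0 hQ using fun i => exists_recurrence (h i)
  have key : ∀ i q, polyOp ((moduleOps C M).H i) (Q i * q) v = 0 := by
    intro i q
    have hpow : ∀ s, polyOp ((moduleOps C M).H i) (Q i * X ^ s) v = 0 := by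
      intro s
      have hexp : Q i * X ^ s
          = ∑ r ∈ Finset.range ((Q i).natDegree + 1), (Q i).coeff r • X ^ (r + s) := by
        conv_lhs => rw [(Q i).as_sum_range_C_mul_X_pow]
        simp only [Finset.sum_mul, Polynomial.smul_eq_C_mul, mul_assoc, pow_add]
      rw [hexp, map_sum, LinearMap.sum_apply]
      simp only [map_smul, LinearMap.smul_apply, polyOp_X_pow]
      change ∑ r ∈ _, (Q i).coeff r • act C M (Hh i (r + s)) v = 0
      simp only [hv, smul_smul]
      rw [← Finset.sum_smul, hQ, zero_smul]
    exact poly_linear_ext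
      (S := (polyOp ((moduleOps C M).H i)).flip v ∘ₗ LinearMap.mulLeft ℂ (Q i))
      (T := 0) hpow q
  refine ⟨∏ i, Q i, Finset.prod_ne_zero_iff.2 fun i _ => hQ0 i, fun i q x hx => ?_⟩
  obtain ⟨t, rfl⟩ := Submodule.mem_span_singleton.1 hx
  obtain ⟨p, hp⟩ := Finset.dvd_prod_of_mem Q (Finset.mem_univ i)
  rw [map_smul, hp, mul_assoc, key, smul_zero]

/-- The finiteness theorem for any module with the universal features of `L(μ(u))`: it is
generated by a highest vector `v`, and a submodule not containing `v` vanishes. -/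
theorem exists_finset_weight {μ : Fin n → ℕ → ℂ}
    (h : ∀ i, IsRationalAtInfMonic (muSeries (μ i))) {v : M}
    (hE : ∀ i r, ymk C (Ee i r) • v = 0)
    (hH : ∀ i r, ymk C (Hh i r) • v = μ i r • v)
    (hcyc : ∀ y : M, ∃ x : Yangian C, x • v = y)
    (hirr : ∀ S : Submodule (Yangian C) M, v ∉ S → S = ⊥) (η : Fin n → ℂ) :
    ∃ s : Finset M, ∀ y : M, (∀ i, ymk C (Hh i 0) • y = η i • y) →
      y ∈ Submodule.span ℂ (s : Set M) := by
  obtain ⟨c, hc⟩ := exists_coweight C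
  set D : Module.End ℂ M := ∑ i, c i • act C M (Hh i 0) with hDdef
  have hDapp : ∀ x, D x = ∑ i, c i • act C M (Hh i 0) x := by
    intro x
    simp [hDdef, LinearMap.sum_apply]
  have hD : ∀ j s x, D ((moduleOps C M).F j s x)
      = (moduleOps C M).F j s (D x) - (moduleOps C M).F j s x := by
    intro j s x
    have hcomm : ∀ i, c i • act C M (Hh i 0) ((moduleOps C M).F j s x)
        = (moduleOps C M).F j s (c i • act C M (Hh i 0) x)
          - (c i * symEntry C i j) • (moduleOps C M).F j s x := by
      intro i
      have h0 : act C M (Hh i 0) ((moduleOps C M).F j s x) = _ := (moduleOps C M).hf0 i j s x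
      rw [h0, smul_sub, map_smul, smul_smul]
      rfl
    rw [hDapp, hDapp, map_sum, Finset.sum_congr rfl fun i _ => hcomm i, Finset.sum_sub_distrib,
      ← Finset.sum_smul, hc, one_smul]
  have hDv : D v = (∑ i, c i * μ i 0) • v := by
    rw [hDapp, Finset.sum_smul]
    exact Finset.sum_congr rfl fun i _ => by rw [act_apply, hH, smul_smul]
  have htop : ∀ S, (moduleOps C M).Stable S → v ∈ S → S = ⊤ := by
    refine fun S hS hv => eq_top_iff.2 fun y _ => ?_
    obtain ⟨x, rfl⟩ := hcyc y
    exact smul_mem_of_stable C hS x hv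
  have hbot : ∀ S, (moduleOps C M).Stable S → v ∉ S → S = ⊥ := by
    intro S hS hv
    let S' : Submodule (Yangian C) M :=
      { S.toAddSubmonoid with smul_mem' := fun x _ hy => smul_mem_of_stable C hS x hy }
    refine (Submodule.eq_bot_iff _).2 fun y hy => ?_
    have hy' : y ∈ S' := hy
    rwa [hirr S' hv, Submodule.mem_bot] at hy'
  obtain ⟨V, hVfin, hV⟩ := DrinfeldOps.exists_finite_eigenspace (O := moduleOps C M) hE hH
    htop hbot (killed_span C h hH) hD hDv (∑ i, c i * η i)
  obtain ⟨s, hs⟩ := (Submodule.fg_iff_finiteDimensional V).2 hVfin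
  refine ⟨s, fun y hy => ?_⟩
  rw [hs]
  refine hV (Module.End.mem_eigenspace_iff.2 ?_)
  rw [hDapp, Finset.sum_smul]
  refine Finset.sum_congr rfl fun i _ => ?_
  rw [act_apply, hy i, smul_smul]

/-! ### The irreducible quotient of the Verma module -/

variable (μ : Fin n → ℕ → ℂ)

/-- The image of the highest vector in `L(μ(u))`. -/
def hwVec : Lmod C μ := (rad C μ).mkQ (oneMu C μ)

lemma smul_hwVec (x : Yangian C) :
    x • hwVec C μ = (rad C μ).mkQ ((vermaIdeal C μ).mkQ x) := by
  rw [hwVec, ← map_smul]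
  congr 1
  change x • (vermaIdeal C μ).mkQ 1 = _
  rw [← map_smul, smul_eq_mul, mul_one]

lemma smul_hwVec_eq_zero {x : Yangian C} (hx : x ∈ vermaIdeal C μ) : x • hwVec C μ = 0 := by
  have h : (vermaIdeal C μ).mkQ x = 0 := (Submodule.Quotient.mk_eq_zero _).2 hx
  rw [smul_hwVec, h, map_zero]

lemma E_hwVec (i : Fin n) (r : ℕ) : ymk C (Ee i r) • hwVec C μ = 0 :=
  smul_hwVec_eq_zero C μ (Submodule.subset_span (Or.inl ⟨(i, r), rfl⟩))

lemma H_hwVec (i : Fin n) (r : ℕ) :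
    ymk C (Hh i r) • hwVec C μ = μ i r • hwVec C μ := by
  have h := smul_hwVec_eq_zero C μ
    (Submodule.subset_span (Or.inr ⟨(i, r), rfl⟩) :
      ymk C (Hh i r) - algebraMap ℂ (Yangian C) (μ i r) ∈ vermaIdeal C μ)
  rwa [sub_smul, algebraMap_smul, sub_eq_zero] at h

lemma exists_smul_hwVec (y : Lmod C μ) : ∃ x : Yangian C, x • hwVec C μ = y := by
  obtain ⟨z, rfl⟩ := (rad C μ).mkQ_surjective y
  obtain ⟨x, rfl⟩ := (vermaIdeal C μ).mkQ_surjective z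
  exact ⟨x, smul_hwVec C μ x⟩

lemma eq_bot_of_hwVec_notMem (S : Submodule (Yangian C) (Lmod C μ)) (hv : hwVec C μ ∉ S) :
    S = ⊥ := by
  have hle : S.comap (rad C μ).mkQ ≤ rad C μ := le_sSup (show oneMu C μ ∉ _ from hv)
  refine (Submodule.eq_bot_iff _).2 fun y hy => ?_
  obtain ⟨z, rfl⟩ := (rad C μ).mkQ_surjective y
  exact (Submodule.Quotient.mk_eq_zero _).2 (hle (show z ∈ S.comap _ from hy))

end Yangian

/-- **Proposition.** If each component `μ_i(u)` of the highest weight is the Laurent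
expansion at `u = ∞` of a rational function `P_i(u)/Q_i(u)` with `P_i`, `Q_i` monic of the
same degree, then all weight subspaces of the `a`-module `L(μ(u))` are finite-dimensional. -/
theorem weight_finDim_of_rational {n : ℕ} (hn : 0 < n) (C : CartanData n)
    (hC : C.Indecomposable) (μ : Fin n → ℕ → ℂ)
    (h : ∀ i : Fin n, IsRationalAtInfMonic (muSeries (μ i))) :
    ∀ η : Fin n → ℂ, WeightFinDim C μ η := by
  intro η
  obtain ⟨s, hs⟩ := exists_finset_weight C h (E_hwVec C μ) (H_hwVec C μ)
    (exists_smul_hwVec C μ) (eq_bot_of_hwVec_notMem C μ) η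
  exact ⟨s, fun y hy => hs y hy⟩
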